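/- For every integer n > 1, S ([true] ++ replicate (n − 2) false ++ [true]) = (2n − 1)/(2n + 1); that is, the vertex (2n−1)/(2n+1) of the S-tree has 0-1 sequence 1 followed by n−2 zeros followed by 1. -/

import Mathlib

/-- Helper computing the S-tree value from the reversed 0-1 sequence. -/
def Sa : List Bool → ℚ
  | [] => 1/2
  | b :: t => if b then 1 / (1 + Sa t) else Sa t / (1 + Sa t)

/-- The S-tree map: `S [] = 1/2`, `S (s ++ [false]) = S s / (1 + S s)` and
`S (s ++ [true]) = 1 / (1 + S s)`. -/
def S (s : List Bool) : ℚ := Sa s.reverse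

/-! Appending a zero sends `x` to `x / (1 + x)`, which is translation by `1` in the coordinate
`x⁻¹`. Starting from `S [true] = 2/3`, appending `k` zeros therefore gives the reciprocal `3/2 + k`,
and appending `true` sends `x` to `1 / (1 + x) = x⁻¹ / (x⁻¹ + 1)`. -/

theorem S_nil : S [] = 1 / 2 := rfl

theorem S_append_false (s : List Bool) : S (s ++ [false]) = S s / (1 + S s) := by
  simp [S, Sa]

theorem S_append_true (s : List Bool) : S (s ++ [true]) = 1 / (1 + S s) := by
  simp [S, Sa]

theorem S_pos (s : List Bool) : 0 < S s := by
  induction s using List.reverseRecOn with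
  | nil => norm_num [S_nil]
  | append_singleton s b ih =>
    cases b with
    | false => rw [S_append_false]; positivity
    | true => rw [S_append_true]; positivity

theorem inv_S_append_false (s : List Bool) : (S (s ++ [false]))⁻¹ = (S s)⁻¹ + 1 := by
  have hs : S s ≠ 0 := (S_pos s).ne'
  rw [S_append_false, inv_div, add_div, div_self hs, one_div]

theorem inv_S_append_replicate_false (s : List Bool) (k : ℕ) :
    (S (s ++ List.replicate k false))⁻¹ = (S s)⁻¹ + k := by
  induction k with
  | zero => simp
  | succ k ih =>
    rw [List.replicate_succ', ← List.append_assoc, inv_S_append_false, ih, Nat.cast_succ,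
      add_assoc]

theorem S_append_true_eq_inv_div (s : List Bool) :
    S (s ++ [true]) = (S s)⁻¹ / ((S s)⁻¹ + 1) := by
  have hs : 0 < S s := S_pos s
  rw [S_append_true]
  field_simp

theorem S_singleton_true : S [true] = 2 / 3 := by
  rw [← List.nil_append [true], S_append_true, S_nil]
  norm_num

/-- For every integer `n > 1`, the vertex `(2n−1)/(2n+1)` of the S-tree has 0-1 sequence
`1`, followed by `n−2` zeros, followed by `1`. -/
theorem stree_odd_over_odd (n : ℕ) (hn : 1 < n) :
    S ([true] ++ List.replicate (n - 2) false ++ [true]) =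
      (2 * (n : ℚ) - 1) / (2 * (n : ℚ) + 1) := by
  have inv_eq : (S ([true] ++ List.replicate (n - 2) false))⁻¹ = (2 * (n : ℚ) - 1) / 2 := by
    rw [inv_S_append_replicate_false, S_singleton_true, Nat.cast_sub hn]
    push_cast
    ring
  have inv_add_one_eq : (2 * (n : ℚ) - 1) / 2 + 1 = (2 * (n : ℚ) + 1) / 2 := by ring
  rw [S_append_true_eq_inv_div, inv_eq, inv_add_one_eq, div_div_div_cancel_right₀ two_ne_zero]
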